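/- Let Λ > 0, κ > 0 and R > √(3/Λ), and set H := √(Λ/3). There exists ε > 0 (depending only on Λ, κ, R) such that for every C¹ solution h : [0,∞)×[0,R] → ℝ of the reduced Einstein-Λ-scalar field equation Dh = G(h − h̄) with sup_{u≥0,0≤r≤R}(|h(u,r)| + |∂_r h(u,r)|) < ε, there exist a constant φ̄ ∈ ℝ and a constant C > 0 such that |h̄(u,r) − φ̄| ≤ C e^{−2Hu} for all u ≥ 0 and 0 ≤ r ≤ R; i.e. the scalar field φ = h̄ converges to a constant exponentially in Bondi time at rate 2H. -/

import Mathlib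

noncomputable section

open Real Set

/-- Radial average `h̄(u,r) = (1/r)∫₀ʳ h(u,s) ds`, with `h̄(u,0) = h(u,0)`. -/
def radAvg (h : ℝ → ℝ → ℝ) (u r : ℝ) : ℝ :=
  if r = 0 then h u 0 else (1 / r) * ∫ s in (0:ℝ)..r, h u s

/-- Metric coefficient `f(u,r) = exp((κ/2)∫₀ʳ (h−h̄)²/s ds)`. -/
def metricF (κ : ℝ) (h : ℝ → ℝ → ℝ) (u r : ℝ) : ℝ :=
  Real.exp ((κ / 2) * ∫ s in (0:ℝ)..r, (h u s - radAvg h u s) ^ 2 / s)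

/-- Metric coefficient `f̃(u,r) = (1/r)∫₀ʳ f ds − (Λ/r)∫₀ʳ f s² ds`, with `f̃(u,0)=1`. -/
def metricFt (Λ κ : ℝ) (h : ℝ → ℝ → ℝ) (u r : ℝ) : ℝ :=
  if r = 0 then 1
  else (1 / r) * (∫ s in (0:ℝ)..r, metricF κ h u s)
    - (Λ / r) * (∫ s in (0:ℝ)..r, metricF κ h u s * s ^ 2)

/-- Zeroth order coefficient `G(u,r) = (1/(2r))[(f − f̃) − Λ f r²]`. -/
def coefG (Λ κ : ℝ) (h : ℝ → ℝ → ℝ) (u r : ℝ) : ℝ :=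
  (1 / (2 * r)) * ((metricF κ h u r - metricFt Λ κ h u r) - Λ * metricF κ h u r * r ^ 2)

/-- Partial derivative of `h` in the Bondi time `u`, one-sided on `[0,∞)`. -/
def pdU (h : ℝ → ℝ → ℝ) (u r : ℝ) : ℝ :=
  derivWithin (fun u' => h u' r) (Ici 0) u

/-- Partial derivative of `h` in the radial coordinate `r`, on `[0,R]`. -/
def pdR (R : ℝ) (h : ℝ → ℝ → ℝ) (u r : ℝ) : ℝ :=
  derivWithin (fun r' => h u r') (Icc 0 R) r

/-- `h : [0,∞)×[0,R] → ℝ` is a C¹ solution of the reduced Einstein-Λ-scalar field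
equation `Dh = G(h − h̄)`: it is continuous with continuous partial derivatives on the
rectangular domain and satisfies the equation for `0 < r ≤ R`. -/
def IsC1Solution (Λ κ R : ℝ) (h : ℝ → ℝ → ℝ) : Prop :=
  ContinuousOn (fun p : ℝ × ℝ => h p.1 p.2) (Ici 0 ×ˢ Icc 0 R) ∧
  (∀ u ∈ Ici (0:ℝ), ∀ r ∈ Icc (0:ℝ) R,
      DifferentiableWithinAt ℝ (fun u' => h u' r) (Ici 0) u ∧
      DifferentiableWithinAt ℝ (fun r' => h u r') (Icc 0 R) r) ∧
  ContinuousOn (fun p : ℝ × ℝ => pdU h p.1 p.2) (Ici 0 ×ˢ Icc 0 R) ∧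
  ContinuousOn (fun p : ℝ × ℝ => pdR R h p.1 p.2) (Ici 0 ×ˢ Icc 0 R) ∧
  ∀ u ∈ Ici (0:ℝ), ∀ r ∈ Ioc (0:ℝ) R,
    pdU h u r - metricFt Λ κ h u r / 2 * pdR R h u r
      = coefG Λ κ h u r * (h u r - radAvg h u r)

section Average

/-- The mean of `k` over `[0, r]`, written so that it makes sense at `r = 0`. -/
def scaledAvg (k : ℝ → ℝ) (r : ℝ) : ℝ := ∫ x in (0:ℝ)..1, k (r * x)

lemma mul_scaledAvg (k : ℝ → ℝ) (r : ℝ) : r * scaledAvg k r = ∫ s in (0:ℝ)..r, k s := by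
  simp [scaledAvg]

lemma scaledAvg_eq_div (k : ℝ → ℝ) {r : ℝ} (hr : r ≠ 0) :
    scaledAvg k r = (1 / r) * ∫ s in (0:ℝ)..r, k s := by
  rw [← mul_scaledAvg]; field_simp

lemma scaledAvg_zero (k : ℝ → ℝ) : scaledAvg k 0 = k 0 := by
  simp [scaledAvg]

lemma radAvg_eq_scaledAvg (h : ℝ → ℝ → ℝ) (u r : ℝ) : radAvg h u r = scaledAvg (h u) r := by
  unfold radAvg
  split_ifs with hr
  · rw [hr, scaledAvg_zero]
  · rw [scaledAvg_eq_div _ hr]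

variable {k : ℝ → ℝ} {R : ℝ}

lemma mul_mem_Icc_of_unit {r x : ℝ} (hr : r ∈ Icc 0 R) (hx : x ∈ Icc (0:ℝ) 1) :
    r * x ∈ Icc 0 R :=
  ⟨mul_nonneg hr.1 hx.1, (mul_le_of_le_one_right hr.1 hx.2).trans hr.2⟩

lemma intervalIntegrable_comp_mul (hk : ContinuousOn k (Icc 0 R)) {r : ℝ} (hr : r ∈ Icc 0 R) :
    IntervalIntegrable (fun x => k (r * x)) MeasureTheory.volume 0 1 := by
  apply ContinuousOn.intervalIntegrable
  rw [uIcc_of_le zero_le_one]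
  exact hk.comp (by fun_prop) fun x hx => mul_mem_Icc_of_unit hr hx

lemma abs_scaledAvg_sub_le (hk : ContinuousOn k (Icc 0 R)) {r₁ r₂ B : ℝ}
    (h₁ : r₁ ∈ Icc 0 R) (h₂ : r₂ ∈ Icc 0 R)
    (hB : ∀ x ∈ Icc (0:ℝ) 1, |k (r₂ * x) - k (r₁ * x)| ≤ B) :
    |scaledAvg k r₂ - scaledAvg k r₁| ≤ B := by
  unfold scaledAvg
  rw [← intervalIntegral.integral_sub (intervalIntegrable_comp_mul hk h₂)
    (intervalIntegrable_comp_mul hk h₁), ← Real.norm_eq_abs]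
  refine (intervalIntegral.norm_integral_le_of_norm_le_const (C := B) fun x hx => ?_).trans ?_
  · rw [uIoc_of_le zero_le_one] at hx
    exact hB x ⟨hx.1.le, hx.2⟩
  · simp

lemma abs_sub_scaledAvg_le (hk : ContinuousOn k (Icc 0 R)) {r B : ℝ} (hr : r ∈ Icc 0 R)
    (hB : ∀ x ∈ Icc (0:ℝ) 1, |k r - k (r * x)| ≤ B) :
    |k r - scaledAvg k r| ≤ B := by
  have : k r = ∫ _ in (0:ℝ)..1, k r := by simp
  unfold scaledAvg
  nth_rewrite 1 [this]
  rw [← intervalIntegral.integral_sub (by simp) (intervalIntegrable_comp_mul hk hr),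
    ← Real.norm_eq_abs]
  refine (intervalIntegral.norm_integral_le_of_norm_le_const (C := B) fun x hx => ?_).trans ?_
  · rw [uIoc_of_le zero_le_one] at hx
    exact hB x ⟨hx.1.le, hx.2⟩
  · simp

lemma continuousOn_of_abs_sub_le {g : ℝ → ℝ} {s : Set ℝ} {m : ℝ}
    (hg : ∀ x ∈ s, ∀ y ∈ s, |g x - g y| ≤ m * |x - y|) : ContinuousOn g s := by
  have : LipschitzOnWith m.toNNReal g s := by
    refine LipschitzOnWith.of_dist_le_mul fun x hx y hy => ?_
    rw [Real.dist_eq, Real.dist_eq]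
    refine (hg x hx y hy).trans ?_
    gcongr
    exact Real.le_coe_toNNReal m
  exact this.continuousOn

lemma continuousOn_of_abs_sub_le_of_le {g : ℝ → ℝ} {m : ℝ}
    (hg : ∀ s t, 0 ≤ s → s ≤ t → t ≤ R → |g t - g s| ≤ m * (t - s)) :
    ContinuousOn g (Icc 0 R) := by
  refine continuousOn_of_abs_sub_le (m := m) fun x hx y hy => ?_
  rcases le_total x y with hxy | hxy
  · rw [abs_sub_comm, abs_sub_comm x, abs_of_nonneg (sub_nonneg.2 hxy)]
    exact hg x y hx.1 hxy hy.2
  · rw [abs_of_nonneg (sub_nonneg.2 hxy)]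
    exact hg y x hy.1 hxy hx.2

/-- If `k` has Lipschitz constant `L t` on `[0, t]`, then its average and the quotient
`(k - scaledAvg k) / (2 r)` inherit Lipschitz bounds. -/
lemma scaledAvg_bounds {L : ℝ} (hL : 0 ≤ L)
    (hk : ∀ s t, 0 ≤ s → s ≤ t → t ≤ R → |k t - k s| ≤ L * t * (t - s)) :
    (∀ r₁ r₂, 0 ≤ r₁ → r₁ ≤ r₂ → r₂ ≤ R →
      |scaledAvg k r₂ - scaledAvg k r₁| ≤ L * r₂ * (r₂ - r₁)) ∧
    (∀ r ∈ Icc 0 R, |(k r - scaledAvg k r) / (2 * r)| ≤ L * r / 2) ∧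
    (∀ r₁ r₂, 0 ≤ r₁ → r₁ ≤ r₂ → r₂ ≤ R →
      |(k r₂ - scaledAvg k r₂) / (2 * r₂) - (k r₁ - scaledAvg k r₁) / (2 * r₁)|
        ≤ 3 / 2 * L * (r₂ - r₁)) := by
  have hc : ContinuousOn k (Icc 0 R) := by
    refine continuousOn_of_abs_sub_le_of_le (m := L * R) fun s t hs hst ht => ?_
    refine (hk s t hs hst ht).trans ?_
    have := sub_nonneg.2 hst
    gcongr
  have hA : ∀ r₁ r₂, 0 ≤ r₁ → r₁ ≤ r₂ → r₂ ≤ R →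
      |scaledAvg k r₂ - scaledAvg k r₁| ≤ L * r₂ * (r₂ - r₁) := by
    intro r₁ r₂ h0 h12 h2
    refine abs_scaledAvg_sub_le hc ⟨h0, h12.trans h2⟩ ⟨h0.trans h12, h2⟩ fun x hx => ?_
    refine (hk _ _ (mul_nonneg h0 hx.1) (mul_le_mul_of_nonneg_right h12 hx.1)
      (mul_mem_Icc_of_unit ⟨h0.trans h12, h2⟩ hx).2).trans ?_
    have h2' : 0 ≤ r₂ := h0.trans h12
    have hd : 0 ≤ r₂ - r₁ := sub_nonneg.2 h12
    rw [← sub_mul]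
    have e1 : r₂ * x ≤ r₂ := mul_le_of_le_one_right h2' hx.2
    have e2 : (r₂ - r₁) * x ≤ r₂ - r₁ := mul_le_of_le_one_right hd hx.2
    have e3 : 0 ≤ (r₂ - r₁) * x := mul_nonneg hd hx.1
    gcongr
  have hD : ∀ r ∈ Icc 0 R, |k r - scaledAvg k r| ≤ L * r * r := by
    intro r hr
    refine abs_sub_scaledAvg_le hc hr fun x hx => ?_
    refine (hk _ _ (mul_nonneg hr.1 hx.1) (mul_le_of_le_one_right hr.1 hx.2) hr.2).trans ?_
    have := mul_nonneg hr.1 hx.1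
    have := hr.1
    gcongr
    linarith
  refine ⟨hA, fun r hr => ?_, fun r₁ r₂ h0 h12 h2 => ?_⟩
  · rcases hr.1.eq_or_lt with h | h
    · simp [← h]
    · rw [abs_div, abs_of_pos (by positivity : 0 < 2 * r), div_le_iff₀ (by positivity)]
      nlinarith [hD r hr]
  · rcases (h0.trans h12).eq_or_lt with h | h
    · have : r₁ = 0 := le_antisymm (h12.trans h.ge) h0
      simp [← h, this]
    rcases h0.eq_or_lt with h1 | h1
    · rw [← h1]
      have := hD r₂ ⟨h.le, h2⟩
      simp only [mul_zero, div_zero, sub_zero]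
      rw [abs_div, abs_of_pos (by positivity : 0 < 2 * r₂), div_le_iff₀ (by positivity)]
      nlinarith [mul_nonneg (mul_nonneg hL h.le) h.le]
    have d1 := hD r₁ ⟨h0, h12.trans h2⟩
    have d2 : |(k r₂ - scaledAvg k r₂) - (k r₁ - scaledAvg k r₁)| ≤ 2 * (L * r₂ * (r₂ - r₁)) := by
      have e1 := abs_le.1 (hk r₁ r₂ h0 h12 h2)
      have e2 := abs_le.1 (hA r₁ r₂ h0 h12 h2)
      exact abs_le.2 ⟨by linarith, by linarith⟩
    generalize k r₂ - scaledAvg k r₂ = D₂ at *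
    generalize k r₁ - scaledAvg k r₁ = D₁ at *
    have e : D₂ / (2 * r₂) - D₁ / (2 * r₁)
        = (D₂ - D₁) / (2 * r₂) - D₁ * (r₂ - r₁) / (2 * r₁ * r₂) := by
      field_simp; ring
    have hd : 0 ≤ r₂ - r₁ := sub_nonneg.2 h12
    have b1 : |(D₂ - D₁) / (2 * r₂)| ≤ L * (r₂ - r₁) := by
      rw [abs_div, abs_of_pos (by positivity : 0 < 2 * r₂), div_le_iff₀ (by positivity)]
      linarith
    have b2 : |D₁ * (r₂ - r₁) / (2 * r₁ * r₂)| ≤ L / 2 * (r₂ - r₁) := by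
      rw [abs_div, abs_mul, abs_of_nonneg hd, abs_of_pos (by positivity : 0 < 2 * r₁ * r₂),
        div_le_iff₀ (by positivity)]
      calc |D₁| * (r₂ - r₁) ≤ (L * r₁ * r₁) * (r₂ - r₁) := by gcongr
        _ ≤ (L * r₁ * r₂) * (r₂ - r₁) := by gcongr
        _ = _ := by ring
    rw [e]
    refine (abs_sub _ _).trans ?_
    linarith

end Average

section Coefficients

variable {Λ κ R m u : ℝ} {h : ℝ → ℝ → ℝ}

lemma abs_sub_radAvg_le (hh : ∀ s ∈ Icc 0 R, ∀ t ∈ Icc 0 R, |h u s - h u t| ≤ m * |s - t|)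
    (hm : 0 ≤ m) {r : ℝ} (hr : r ∈ Icc 0 R) : |h u r - radAvg h u r| ≤ m * r := by
  rw [radAvg_eq_scaledAvg]
  refine abs_sub_scaledAvg_le (continuousOn_of_abs_sub_le hh) hr fun x hx => ?_
  refine (hh _ hr _ (mul_mem_Icc_of_unit hr hx)).trans ?_
  have : r * x ≤ r := mul_le_of_le_one_right hr.1 hx.2
  rw [abs_of_nonneg (by linarith)]
  gcongr
  linarith [mul_nonneg hr.1 hx.1]

lemma continuousOn_radAvg (hh : ∀ s ∈ Icc 0 R, ∀ t ∈ Icc 0 R, |h u s - h u t| ≤ m * |s - t|)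
    (hm : 0 ≤ m) : ContinuousOn (radAvg h u) (Icc 0 R) := by
  refine continuousOn_of_abs_sub_le (m := m) fun s hs t ht => ?_
  rw [radAvg_eq_scaledAvg, radAvg_eq_scaledAvg]
  refine abs_scaledAvg_sub_le (continuousOn_of_abs_sub_le hh) ht hs fun x hx => ?_
  refine (hh _ (mul_mem_Icc_of_unit hs hx) _ (mul_mem_Icc_of_unit ht hx)).trans ?_
  rw [← sub_mul, abs_mul, abs_of_nonneg hx.1]
  gcongr
  exact mul_le_of_le_one_right (abs_nonneg _) hx.2

lemma sq_sub_radAvg_div_mem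
    (hh : ∀ s ∈ Icc 0 R, ∀ t ∈ Icc 0 R, |h u s - h u t| ≤ m * |s - t|)
    (hm : 0 ≤ m) {r : ℝ} (hr : r ∈ Icc 0 R) :
    (h u r - radAvg h u r) ^ 2 / r ∈ Icc 0 (m ^ 2 * r) := by
  refine ⟨div_nonneg (sq_nonneg _) hr.1, ?_⟩
  rcases hr.1.eq_or_lt with h0 | h0
  · simp [← h0]
  rw [div_le_iff₀ h0, ← sq_abs]
  have := abs_sub_radAvg_le hh hm hr
  calc |h u r - radAvg h u r| ^ 2 ≤ (m * r) ^ 2 := by gcongr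
    _ = _ := by ring

lemma intervalIntegrable_sq_sub_radAvg_div
    (hh : ∀ s ∈ Icc 0 R, ∀ t ∈ Icc 0 R, |h u s - h u t| ≤ m * |s - t|)
    (hm : 0 ≤ m) {a b : ℝ} (ha : 0 ≤ a) (hab : a ≤ b) (hb : b ≤ R) :
    IntervalIntegrable (fun s => (h u s - radAvg h u s) ^ 2 / s) MeasureTheory.volume a b := by
  rw [intervalIntegrable_iff_integrableOn_Ioc_of_le hab]
  have hsub : Ioc a b ⊆ Icc 0 R := fun x hx => ⟨ha.trans hx.1.le, hx.2.trans hb⟩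
  have hcont : ContinuousOn (fun s => (h u s - radAvg h u s) ^ 2 / s) (Ioc a b) :=
    ((((continuousOn_of_abs_sub_le hh).mono hsub).sub
      ((continuousOn_radAvg hh hm).mono hsub)).pow 2).div continuousOn_id
      fun x hx => (ha.trans_lt hx.1).ne'
  refine MeasureTheory.IntegrableOn.of_bound measure_Ioc_lt_top
    (hcont.aestronglyMeasurable measurableSet_Ioc) (m ^ 2 * R) ?_
  refine (MeasureTheory.ae_restrict_mem measurableSet_Ioc).mono fun x hx => ?_
  obtain ⟨h1, h2⟩ := sq_sub_radAvg_div_mem hh hm (hsub hx)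
  rw [Real.norm_eq_abs, abs_of_nonneg h1]
  refine h2.trans ?_
  have := (hsub hx).2
  gcongr

lemma metricF_sub_mem (hκ : 0 ≤ κ) (hm : 0 ≤ m) (hm1 : m ≤ 1)
    (hh : ∀ s ∈ Icc 0 R, ∀ t ∈ Icc 0 R, |h u s - h u t| ≤ m * |s - t|)
    {s t : ℝ} (hs : 0 ≤ s) (hst : s ≤ t) (ht : t ≤ R) :
    metricF κ h u t - metricF κ h u s
      ∈ Icc 0 (κ / 2 * exp (κ / 2 * R ^ 2) * m ^ 2 * t * (t - s)) := by
  set q : ℝ → ℝ := fun s => (h u s - radAvg h u s) ^ 2 / s with hq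
  have hq_mem : ∀ x ∈ Icc 0 R, q x ∈ Icc 0 (m ^ 2 * x) := fun x hx =>
    sq_sub_radAvg_div_mem hh hm hx
  have hint : ∀ {a b : ℝ}, 0 ≤ a → a ≤ b → b ≤ R →
      ∫ x in a..b, q x ∈ Icc 0 (m ^ 2 * b * (b - a)) := by
    intro a b ha hab hb
    refine ⟨intervalIntegral.integral_nonneg hab fun x hx =>
      (hq_mem x ⟨ha.trans hx.1, hx.2.trans hb⟩).1, ?_⟩
    calc ∫ x in a..b, q x ≤ ∫ _ in a..b, m ^ 2 * b := by
          refine intervalIntegral.integral_mono_on hab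
            (intervalIntegrable_sq_sub_radAvg_div hh hm ha hab hb) (by simp) fun x hx => ?_
          refine (hq_mem x ⟨ha.trans hx.1, hx.2.trans hb⟩).2.trans ?_
          have := hx.2
          gcongr
      _ = _ := by rw [intervalIntegral.integral_const, smul_eq_mul]; ring
  have h0t := hs.trans hst
  have hR := h0t.trans ht
  have hI := hint hs hst ht
  have hadd : (∫ x in (0:ℝ)..s, q x) + ∫ x in s..t, q x = ∫ x in (0:ℝ)..t, q x :=
    intervalIntegral.integral_add_adjacent_intervals
      (intervalIntegrable_sq_sub_radAvg_div hh hm le_rfl hs (hst.trans ht))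
      (intervalIntegrable_sq_sub_radAvg_div hh hm hs hst ht)
  have hT : ∫ x in (0:ℝ)..t, q x ≤ R ^ 2 := by
    refine (hint le_rfl h0t ht).2.trans ?_
    have : m ^ 2 ≤ 1 := pow_le_one₀ hm hm1
    calc m ^ 2 * t * (t - 0) ≤ 1 * R * R := by
          gcongr
          linarith
      _ = R ^ 2 := by ring
  unfold metricF
  change exp (κ / 2 * ∫ x in (0:ℝ)..t, q x) - exp (κ / 2 * ∫ x in (0:ℝ)..s, q x) ∈ _
  set a := ∫ x in (0:ℝ)..s, q x
  set b := ∫ x in (0:ℝ)..t, q x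
  have hab : a ≤ b := by linarith [hI.1]
  refine ⟨sub_nonneg.2 (exp_le_exp.2 (by gcongr)), ?_⟩
  have e1 : exp (κ / 2 * b) - exp (κ / 2 * a) ≤ exp (κ / 2 * b) * (κ / 2 * (b - a)) := by
    have := add_one_le_exp (κ / 2 * a - κ / 2 * b)
    have e : exp (κ / 2 * a) = exp (κ / 2 * b) * exp (κ / 2 * a - κ / 2 * b) := by
      rw [← exp_add]; congr 1; ring
    rw [e]
    nlinarith [exp_pos (κ / 2 * b)]
  have e2 : b - a ≤ m ^ 2 * t * (t - s) := by linarith [hI.2]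
  have hba := sub_nonneg.2 hab
  calc _ ≤ _ := e1
    _ ≤ exp (κ / 2 * R ^ 2) * (κ / 2 * (m ^ 2 * t * (t - s))) := by gcongr
    _ = _ := by ring

lemma metricF_zero : metricF κ h u 0 = 1 := by simp [metricF]

/-- The deviation from de Sitter of the averaged quantity defining `metricFt`. -/
def metricDev (Λ κ : ℝ) (h : ℝ → ℝ → ℝ) (u s : ℝ) : ℝ := (metricF κ h u s - 1) * (1 - Λ * s ^ 2)

lemma abs_metricDev_sub_le (hΛ : 0 ≤ Λ) (hκ : 0 ≤ κ) (hm : 0 ≤ m) (hm1 : m ≤ 1)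
    (hh : ∀ s ∈ Icc 0 R, ∀ t ∈ Icc 0 R, |h u s - h u t| ≤ m * |s - t|)
    {s t : ℝ} (hs : 0 ≤ s) (hst : s ≤ t) (ht : t ≤ R) :
    |metricDev Λ κ h u t - metricDev Λ κ h u s|
      ≤ κ / 2 * exp (κ / 2 * R ^ 2) * (1 + 3 * Λ * R ^ 2) * m ^ 2 * t * (t - s) := by
  have h1 := metricF_sub_mem hκ hm hm1 hh hs hst ht
  have h2 := metricF_sub_mem hκ hm hm1 hh le_rfl hs (hst.trans ht)
  rw [metricF_zero, sub_zero] at h2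
  set c := κ / 2 * exp (κ / 2 * R ^ 2) * m ^ 2
  have hc : 0 ≤ c := by positivity
  have h0t := hs.trans hst
  have hts := sub_nonneg.2 hst
  have e : metricDev Λ κ h u t - metricDev Λ κ h u s
      = (metricF κ h u t - metricF κ h u s) * (1 - Λ * t ^ 2)
        - (metricF κ h u s - 1) * (Λ * (t + s) * (t - s)) := by
    unfold metricDev; ring
  have b1 : |(metricF κ h u t - metricF κ h u s) * (1 - Λ * t ^ 2)|
      ≤ c * t * (t - s) * (1 + Λ * R ^ 2) := by
    rw [abs_mul, abs_of_nonneg h1.1]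
    have : |1 - Λ * t ^ 2| ≤ 1 + Λ * R ^ 2 := by
      have : Λ * t ^ 2 ≤ Λ * R ^ 2 := by gcongr
      have : 0 ≤ Λ * t ^ 2 := by positivity
      exact abs_le.2 ⟨by linarith, by linarith⟩
    have := h1.2
    gcongr
  have b2 : |(metricF κ h u s - 1) * (Λ * (t + s) * (t - s))|
      ≤ (c * R * R) * (Λ * (t + t) * (t - s)) := by
    rw [abs_mul, abs_of_nonneg h2.1, abs_of_nonneg (by positivity)]
    have : metricF κ h u s - 1 ≤ c * R * R := by
      refine h2.2.trans ?_
      have := hst.trans ht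
      have := h0t.trans ht
      gcongr
    have : 0 ≤ c * R * R := by have := h0t.trans ht; positivity
    gcongr
  rw [e]
  refine ((abs_sub _ _).trans (add_le_add b1 b2)).trans (le_of_eq ?_)
  simp only [c]; ring

lemma continuousOn_metricF (hκ : 0 ≤ κ) (hm : 0 ≤ m) (hm1 : m ≤ 1)
    (hh : ∀ s ∈ Icc 0 R, ∀ t ∈ Icc 0 R, |h u s - h u t| ≤ m * |s - t|) :
    ContinuousOn (metricF κ h u) (Icc 0 R) := by
  refine continuousOn_of_abs_sub_le_of_le (m := κ / 2 * exp (κ / 2 * R ^ 2) * m ^ 2 * R)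
    fun s t hs hst ht => ?_
  have h1 := metricF_sub_mem hκ hm hm1 hh hs hst ht
  rw [abs_of_nonneg h1.1]
  refine h1.2.trans ?_
  have := sub_nonneg.2 hst
  gcongr

lemma metricFt_eq (hκ : 0 ≤ κ) (hm : 0 ≤ m) (hm1 : m ≤ 1)
    (hh : ∀ s ∈ Icc 0 R, ∀ t ∈ Icc 0 R, |h u s - h u t| ≤ m * |s - t|)
    {r : ℝ} (hr : r ∈ Icc 0 R) :
    metricFt Λ κ h u r = 1 - Λ / 3 * r ^ 2 + scaledAvg (metricDev Λ κ h u) r := by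
  unfold metricFt
  split_ifs with h0
  · rw [h0, scaledAvg_zero]; simp [metricDev, metricF_zero]
  · have hc := continuousOn_metricF hκ hm hm1 hh
    have hsub : uIcc 0 r ⊆ Icc 0 R := by
      rw [uIcc_of_le hr.1]; exact Icc_subset_Icc_right hr.2
    have i1 : IntervalIntegrable (metricF κ h u) MeasureTheory.volume 0 r :=
      (hc.mono hsub).intervalIntegrable
    have i2 : IntervalIntegrable (fun s => metricF κ h u s * s ^ 2) MeasureTheory.volume 0 r :=
      ((hc.mono hsub).mul (by fun_prop)).intervalIntegrable
    have i3 : IntervalIntegrable (fun s : ℝ => Λ * s ^ 2 - 1) MeasureTheory.volume 0 r :=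
      Continuous.intervalIntegrable (by fun_prop) _ _
    have e : ∫ s in (0:ℝ)..r, metricDev Λ κ h u s
        = (∫ s in (0:ℝ)..r, metricF κ h u s) - Λ * (∫ s in (0:ℝ)..r, metricF κ h u s * s ^ 2)
          + (Λ * (r ^ 3 / 3) - r) := by
      have e3 : ∫ s in (0:ℝ)..r, (Λ * s ^ 2 - 1) = Λ * (r ^ 3 / 3) - r := by
        rw [intervalIntegral.integral_sub (Continuous.intervalIntegrable (by fun_prop) _ _)
          (by simp)]
        norm_num [integral_pow]
      rw [← e3, ← intervalIntegral.integral_const_mul,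
        ← intervalIntegral.integral_sub i1 (i2.const_mul Λ),
        ← intervalIntegral.integral_add (i1.sub (i2.const_mul Λ)) i3]
      congr 1; ext s; unfold metricDev; ring
    rw [scaledAvg_eq_div _ h0, e]
    field_simp; ring

lemma coefG_eq (hκ : 0 ≤ κ) (hm : 0 ≤ m) (hm1 : m ≤ 1)
    (hh : ∀ s ∈ Icc 0 R, ∀ t ∈ Icc 0 R, |h u s - h u t| ≤ m * |s - t|)
    {r : ℝ} (hr : r ∈ Icc 0 R) :
    coefG Λ κ h u r = -(Λ / 3) * r
      + (metricDev Λ κ h u r - scaledAvg (metricDev Λ κ h u) r) / (2 * r) := by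
  unfold coefG
  rw [metricFt_eq hκ hm hm1 hh hr]
  rcases eq_or_ne r 0 with h0 | h0
  · simp [h0]
  · unfold metricDev; field_simp; ring

/-- For `h(u,·)` with Lipschitz constant `m`, the coefficients `f̃` and `G` are, together with their
Lipschitz constants, `O(m²)`-close to those of de Sitter space. -/
lemma exists_coef_bounds (hΛ : 0 < Λ) (hκ : 0 < κ) (hR : 0 < R) :
    ∃ c > 0, ∀ (h : ℝ → ℝ → ℝ) (u m : ℝ), 0 ≤ m → m ≤ 1 →
      (∀ s ∈ Icc 0 R, ∀ t ∈ Icc 0 R, |h u s - h u t| ≤ m * |s - t|) →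
      ∃ F Γ : ℝ → ℝ,
        (∀ r ∈ Icc 0 R, metricFt Λ κ h u r = 1 - Λ / 3 * r ^ 2 + F r ∧
          coefG Λ κ h u r = -(Λ / 3) * r + Γ r ∧ |F r| ≤ c * m ^ 2 ∧ |Γ r| ≤ c * m ^ 2) ∧
        ∀ r₁ r₂, 0 ≤ r₁ → r₁ ≤ r₂ → r₂ ≤ R →
          |F r₂ - F r₁| ≤ c * m ^ 2 * (r₂ - r₁) ∧ |Γ r₂ - Γ r₁| ≤ c * m ^ 2 * (r₂ - r₁) := by
  set c₀ := κ / 2 * exp (κ / 2 * R ^ 2) * (1 + 3 * Λ * R ^ 2) with hc₀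
  have hc₀_pos : 0 < c₀ := by positivity
  refine ⟨c₀ * (R ^ 2 + R + 2), by positivity, fun h u m hm hm1 hh => ?_⟩
  have hk : ∀ s t, 0 ≤ s → s ≤ t → t ≤ R → |metricDev Λ κ h u t - metricDev Λ κ h u s|
      ≤ c₀ * m ^ 2 * t * (t - s) :=
    fun s t hs hst ht => abs_metricDev_sub_le hΛ.le hκ.le hm hm1 hh hs hst ht
  obtain ⟨b1, b2, b3⟩ := scaledAvg_bounds (by positivity) hk
  have hL : 0 ≤ c₀ * m ^ 2 := by positivity
  refine ⟨scaledAvg (metricDev Λ κ h u),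
    fun r => (metricDev Λ κ h u r - scaledAvg (metricDev Λ κ h u) r) / (2 * r),
    fun r hr => ⟨metricFt_eq hκ.le hm hm1 hh hr, coefG_eq hκ.le hm hm1 hh hr, ?_, ?_⟩,
    fun r₁ r₂ h0 h12 h2 => ⟨?_, ?_⟩⟩
  · have := b1 0 r le_rfl hr.1 hr.2
    rw [scaledAvg_zero, metricDev, metricF_zero, sub_self, zero_mul, sub_zero, sub_zero] at this
    have h2 : r * r ≤ R ^ 2 := by rw [sq]; exact mul_self_le_mul_self hr.1 hr.2
    nlinarith [mul_nonneg hL (sub_nonneg.2 h2), mul_nonneg hL hR.le]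
  · have := b2 r hr
    nlinarith [mul_nonneg hL (sub_nonneg.2 hr.2), mul_nonneg hL hR.le, mul_nonneg hL (sq_nonneg R)]
  · have := b1 r₁ r₂ h0 h12 h2
    have hLd : 0 ≤ c₀ * m ^ 2 * (r₂ - r₁) := mul_nonneg hL (sub_nonneg.2 h12)
    nlinarith [mul_nonneg hLd (sub_nonneg.2 h2), mul_nonneg hLd (sq_nonneg R)]
  · have := b3 r₁ r₂ h0 h12 h2
    have hLd : 0 ≤ c₀ * m ^ 2 * (r₂ - r₁) := mul_nonneg hL (sub_nonneg.2 h12)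
    nlinarith [mul_nonneg hLd hR.le, mul_nonneg hLd (sq_nonneg R)]

end Coefficients

section Profile

/-- The radial derivative of the exact solution of the linear equation on de Sitter space
decaying like `exp (-2 H u)`. -/
def decayWeight (H r : ℝ) : ℝ := ((1 + H * r)⁻¹) ^ 4

/-- A primitive of `decayWeight H`. -/
def decayProfile (H r : ℝ) : ℝ := -(1 / (3 * H)) * ((1 + H * r)⁻¹) ^ 3

variable {H R : ℝ}

lemma hasDerivAt_decayProfile (hH : 0 < H) {r : ℝ} (hr : 0 ≤ r) :
    HasDerivAt (decayProfile H) (decayWeight H r) r := by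
  have hp : 1 + H * r ≠ 0 := by positivity
  have h1 : HasDerivAt (fun r => 1 + H * r) H r := by
    simpa using ((hasDerivAt_id r).const_mul H).const_add 1
  refine (((h1.inv hp).pow 3).const_mul (-(1 / (3 * H)))).congr_deriv ?_
  unfold decayWeight
  simp only [Pi.inv_apply]
  field_simp
  norm_num
  field_simp

lemma integral_decayProfile (hH : 0 < H) {r₁ r₂ : ℝ} (h1 : 0 ≤ r₁) (h12 : r₁ ≤ r₂) :
    ∫ s in r₁..r₂, decayProfile H s
      = 1 / (6 * H ^ 2) * ((1 + H * r₂)⁻¹) ^ 2 - 1 / (6 * H ^ 2) * ((1 + H * r₁)⁻¹) ^ 2 := by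
  have hd : ∀ r, 0 ≤ r → HasDerivAt (fun r => 1 / (6 * H ^ 2) * ((1 + H * r)⁻¹) ^ 2)
      (decayProfile H r) r := by
    intro r hr
    have hp : 1 + H * r ≠ 0 := by positivity
    have h1 : HasDerivAt (fun r => 1 + H * r) H r := by
      simpa using ((hasDerivAt_id r).const_mul H).const_add 1
    refine (((h1.inv hp).pow 2).const_mul (1 / (6 * H ^ 2))).congr_deriv ?_
    unfold decayProfile
    simp only [Pi.inv_apply]
    field_simp
    norm_num
    field_simp
    norm_num
  refine intervalIntegral.integral_eq_sub_of_hasDerivAt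
    (f := fun r => 1 / (6 * H ^ 2) * ((1 + H * r)⁻¹) ^ 2) (fun x hx => ?_) ?_
  · rw [uIcc_of_le h12] at hx
    exact hd x (h1.trans hx.1)
  · refine ContinuousOn.intervalIntegrable fun x hx => ?_
    rw [uIcc_of_le h12] at hx
    exact (hasDerivAt_decayProfile hH (h1.trans hx.1)).continuousAt.continuousWithinAt

lemma decayWeight_mem (hH : 0 < H) {r : ℝ} (hr : 0 ≤ r) : decayWeight H r ∈ Icc 0 1 := by
  have : 0 ≤ H * r := by positivity
  exact ⟨by unfold decayWeight; positivity,
    pow_le_one₀ (by positivity) (inv_le_one_of_one_le₀ (by linarith))⟩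

lemma decayProfile_bounds (hH : 0 < H) {r₁ r₂ : ℝ} (h1 : 0 ≤ r₁) (h12 : r₁ ≤ r₂) (h2 : r₂ ≤ R) :
    decayProfile H r₂ - decayProfile H r₁ ≤ r₂ - r₁ ∧
    r₂ - r₁ ≤ (1 + H * R) ^ 4 * (decayProfile H r₂ - decayProfile H r₁) ∧
    |decayWeight H r₂ - decayWeight H r₁| ≤ 4 * H * (r₂ - r₁) := by
  have hd := sub_nonneg.2 h12
  have p1 : 1 ≤ 1 + H * r₁ := by have : 0 ≤ H * r₁ := by positivity
                                 linarith
  have p12 : 1 + H * r₁ ≤ 1 + H * r₂ := by gcongr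
  have p2 : 1 + H * r₂ ≤ 1 + H * R := by gcongr
  have hx1 : (1 + H * r₁)⁻¹ ≤ 1 := inv_le_one_of_one_le₀ p1
  have hx21 : (1 + H * r₂)⁻¹ ≤ (1 + H * r₁)⁻¹ := by gcongr
  have hx2 : (1 + H * R)⁻¹ ≤ (1 + H * r₂)⁻¹ := by
    have : 0 < 1 + H * r₂ := by linarith
    gcongr
  have hy : 0 < (1 + H * R)⁻¹ := by
    have : 0 < 1 + H * R := by linarith
    positivity
  have hyR : (1 + H * R) * (1 + H * R)⁻¹ = 1 := mul_inv_cancel₀ (by linarith)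
  have hdiff : (1 + H * r₁)⁻¹ - (1 + H * r₂)⁻¹
      = H * (r₂ - r₁) * ((1 + H * r₁)⁻¹ * (1 + H * r₂)⁻¹) := by
    have : 1 + H * r₁ ≠ 0 := by linarith
    have : 1 + H * r₂ ≠ 0 := by linarith
    field_simp; ring
  unfold decayProfile decayWeight
  generalize (1 + H * r₁)⁻¹ = x₁ at *
  generalize (1 + H * r₂)⁻¹ = x₂ at *
  generalize (1 + H * R)⁻¹ = y at *
  have hx2p : 0 < x₂ := hy.trans_le hx2
  have hx1p : 0 < x₁ := hx2p.trans_le hx21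
  have e : -(1 / (3 * H)) * x₂ ^ 3 - -(1 / (3 * H)) * x₁ ^ 3
      = (r₂ - r₁) * (x₁ * x₂ * (x₁ ^ 2 + x₁ * x₂ + x₂ ^ 2) / 3) := by
    have : x₁ ^ 3 - x₂ ^ 3 = H * (r₂ - r₁) * (x₁ * x₂) * (x₁ ^ 2 + x₁ * x₂ + x₂ ^ 2) := by
      rw [← hdiff]; ring
    field_simp
    linear_combination this
  rw [e]
  have hx2' : x₂ ≤ 1 := hx21.trans hx1
  refine ⟨?_, ?_, ?_⟩
  · refine mul_le_of_le_one_right hd ?_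
    have a1 : x₁ * x₂ ≤ 1 := mul_le_one₀ hx1 hx2p.le hx2'
    have a2 : x₁ ^ 2 + x₁ * x₂ + x₂ ^ 2 ≤ 3 := by nlinarith
    have : x₁ * x₂ * (x₁ ^ 2 + x₁ * x₂ + x₂ ^ 2) ≤ 1 * 3 := by gcongr
    linarith
  · have : y ^ 4 ≤ x₁ * x₂ * (x₁ ^ 2 + x₁ * x₂ + x₂ ^ 2) / 3 := by
      have hy1 : y ≤ x₁ := hx2.trans hx21
      have : y * y * (y ^ 2 + y * y + y ^ 2) ≤ x₁ * x₂ * (x₁ ^ 2 + x₁ * x₂ + x₂ ^ 2) := by gcongr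
      nlinarith
    calc r₂ - r₁ = (1 + H * R) ^ 4 * ((r₂ - r₁) * y ^ 4) := by
          have : (1 + H * R) ^ 4 * y ^ 4 = 1 := by rw [← mul_pow, hyR, one_pow]
          linear_combination -(r₂ - r₁) * this
      _ ≤ _ := by gcongr
  · have a1 : x₁ * x₂ ≤ 1 := mul_le_one₀ hx1 hx2p.le hx2'
    have h0 : x₂ ^ 4 ≤ x₁ ^ 4 := by gcongr
    rw [abs_sub_comm, abs_of_nonneg (by linarith)]
    have e4 : x₁ ^ 4 - x₂ ^ 4
        = H * (r₂ - r₁) * ((x₁ * x₂) * (x₁ ^ 3 + x₁ ^ 2 * x₂ + x₁ * x₂ ^ 2 + x₂ ^ 3)) := by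
      rw [← mul_assoc, ← hdiff]; ring
    have b1 : x₁ ^ 3 ≤ 1 := pow_le_one₀ hx1p.le hx1
    have b2 : x₂ ^ 3 ≤ 1 := pow_le_one₀ hx2p.le hx2'
    have b3 : x₁ ^ 2 * x₂ ≤ 1 := mul_le_one₀ (pow_le_one₀ hx1p.le hx1) hx2p.le hx2'
    have b4 : x₁ * x₂ ^ 2 ≤ 1 := mul_le_one₀ hx1 (by positivity) (pow_le_one₀ hx2p.le hx2')
    have b5 : (x₁ * x₂) * (x₁ ^ 3 + x₁ ^ 2 * x₂ + x₁ * x₂ ^ 2 + x₂ ^ 3) ≤ 1 * 4 := by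
      gcongr
      linarith
    rw [e4]
    calc _ ≤ H * (r₂ - r₁) * (1 * 4) := by gcongr
      _ = _ := by ring

/-- The weight is an exact solution of the linearised equation. -/
lemma decayProfile_balance (hH : 0 < H) {r₁ r₂ : ℝ} (h1 : 0 ≤ r₁) (h12 : r₁ ≤ r₂) :
    (1 - H ^ 2 * r₂ ^ 2) / 2 * decayWeight H r₂ - (1 - H ^ 2 * r₁ ^ 2) / 2 * decayWeight H r₁
      - H ^ 2 * (r₂ * decayProfile H r₂ - r₁ * decayProfile H r₁
        - ∫ s in r₁..r₂, decayProfile H s)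
      = -2 * H * (decayProfile H r₂ - decayProfile H r₁) := by
  rw [integral_decayProfile hH h1 h12]
  have key : ∀ r, 0 ≤ r → (1 - H ^ 2 * r ^ 2) / 2 * decayWeight H r
      - H ^ 2 * (r * decayProfile H r - 1 / (6 * H ^ 2) * ((1 + H * r)⁻¹) ^ 2)
      + 2 * H * decayProfile H r = 0 := by
    intro r hr
    have hp : 1 + H * r ≠ 0 := by positivity
    unfold decayProfile decayWeight
    field_simp
    ring
  linear_combination key r₂ (h1.trans h12) - key r₁ h1

/-- The right-hand side of the equation for a difference `g r₂ - g r₁` that is extremal with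
respect to the bound `b (A r₂ - A r₁) + M`. -/
lemma exists_extremal_difference_bound (hH : 0 < H) (hR : 0 ≤ R) :
    ∃ C > 0, ∀ (g F Γ : ℝ → ℝ) (δ b M r₁ r₂ : ℝ), ContinuousOn g (Icc 0 R) →
      0 ≤ δ → 0 ≤ b → 0 ≤ M → 0 ≤ r₁ → r₁ ≤ r₂ → r₂ ≤ R →
      (∀ r ∈ Icc 0 R, |F r| ≤ δ ∧ |Γ r| ≤ δ) →
      |F r₂ - F r₁| ≤ δ * (r₂ - r₁) → |Γ r₂ - Γ r₁| ≤ δ * (r₂ - r₁) →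
      (∀ s t, 0 ≤ s → s ≤ t → t ≤ R →
        |g t - g s| ≤ b * (decayProfile H t - decayProfile H s) + M) →
      g r₂ - g r₁ = b * (decayProfile H r₂ - decayProfile H r₁) + M →
      b * ((1 - H ^ 2 * r₂ ^ 2 + F r₂) / 2 * decayWeight H r₂
          - (1 - H ^ 2 * r₁ ^ 2 + F r₁) / 2 * decayWeight H r₁)
        + ((-H ^ 2 * r₂ + Γ r₂) * (g r₂ - scaledAvg g r₂)
          - (-H ^ 2 * r₁ + Γ r₁) * (g r₁ - scaledAvg g r₁))
        ≤ (-2 * H + C * δ) * (b * (decayProfile H r₂ - decayProfile H r₁)) + C * δ * M := by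
  refine ⟨(3 + 4 * H + R) * (1 + H * R) ^ 4 + 2 + R, by positivity, ?_⟩
  intro g F Γ δ b M r₁ r₂ hgc hδ hb hM h1 h12 h2 hFΓ hF hΓ hg heq
  obtain ⟨hA1, hA2, ha⟩ := decayProfile_bounds hH h1 h12 h2
  have hbal := decayProfile_balance hH h1 h12
  have hr1 : r₁ ∈ Icc 0 R := ⟨h1, h12.trans h2⟩
  have hr2 : r₂ ∈ Icc 0 R := ⟨h1.trans h12, h2⟩
  have hw2 := decayWeight_mem hH hr2.1
  have hd := sub_nonneg.2 h12
  set ΔA := decayProfile H r₂ - decayProfile H r₁ with hΔA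
  -- the de Sitter part of the zeroth order term
  have hint : ∫ s in r₁..r₂, g s
      ≤ (r₂ - r₁) * (g r₁ + M - b * decayProfile H r₁) + b * ∫ s in r₁..r₂, decayProfile H s := by
    have iA : IntervalIntegrable (decayProfile H) MeasureTheory.volume r₁ r₂ := by
      refine ContinuousOn.intervalIntegrable fun x hx => ?_
      rw [uIcc_of_le h12] at hx
      exact (hasDerivAt_decayProfile hH (h1.trans hx.1)).continuousAt.continuousWithinAt
    have ig : IntervalIntegrable g MeasureTheory.volume r₁ r₂ := by
      refine (hgc.mono ?_).intervalIntegrable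
      rw [uIcc_of_le h12]
      exact Icc_subset_Icc h1 h2
    calc ∫ s in r₁..r₂, g s
        ≤ ∫ s in r₁..r₂, ((g r₁ + M - b * decayProfile H r₁) + b * decayProfile H s) := by
          refine intervalIntegral.integral_mono_on h12 ig
            ((by simp : IntervalIntegrable _ _ _ _).add (iA.const_mul b)) fun x hx => ?_
          have := (abs_le.1 (hg r₁ x h1 hx.1 (hx.2.trans h2))).2
          linarith
      _ = _ := by
          rw [intervalIntegral.integral_add (by simp) (iA.const_mul b),
            intervalIntegral.integral_const, intervalIntegral.integral_const_mul, smul_eq_mul]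
  have hsplit : r₂ * (g r₂ - scaledAvg g r₂) - r₁ * (g r₁ - scaledAvg g r₁)
      = r₂ * g r₂ - r₁ * g r₁ - ∫ s in r₁..r₂, g s := by
    have ig : ∀ r ∈ Icc 0 R, IntervalIntegrable g MeasureTheory.volume 0 r := by
      intro r hr
      refine (hgc.mono ?_).intervalIntegrable
      rw [uIcc_of_le hr.1]
      exact Icc_subset_Icc_right hr.2
    have := intervalIntegral.integral_interval_sub_left (ig r₂ hr2) (ig r₁ hr1)
    rw [mul_sub, mul_sub, mul_scaledAvg, mul_scaledAvg, ← this]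
    ring
  have hlin : b * ((1 - H ^ 2 * r₂ ^ 2) / 2 * decayWeight H r₂
        - (1 - H ^ 2 * r₁ ^ 2) / 2 * decayWeight H r₁)
      - H ^ 2 * (r₂ * (g r₂ - scaledAvg g r₂) - r₁ * (g r₁ - scaledAvg g r₁))
      ≤ -2 * H * (b * ΔA) := by
    rw [hsplit]
    have hgr : g r₂ = g r₁ + b * ΔA + M := by linarith
    have hH2 : 0 ≤ H ^ 2 := sq_nonneg H
    have hlow : b * (r₂ * decayProfile H r₂ - r₁ * decayProfile H r₁
          - ∫ s in r₁..r₂, decayProfile H s)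
        ≤ r₂ * g r₂ - r₁ * g r₁ - ∫ s in r₁..r₂, g s := by
      have := mul_nonneg h1 hM
      rw [hgr, hΔA]
      linarith
    have := mul_le_mul_of_nonneg_left hlow hH2
    linear_combination this + b * hbal
  -- the perturbation terms
  have hgavg : |g r₁ - scaledAvg g r₁| ≤ b * R + M := by
    refine abs_sub_scaledAvg_le hgc hr1 fun x hx => ?_
    have hx1 : r₁ * x ≤ r₁ := mul_le_of_le_one_right h1 hx.2
    have hx0 := mul_nonneg h1 hx.1
    refine (hg _ _ hx0 hx1 hr1.2).trans ?_
    have := (decayProfile_bounds hH hx0 hx1 hr1.2).1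
    have : decayProfile H r₁ - decayProfile H (r₁ * x) ≤ R := by linarith [hr1.2]
    gcongr
  have hΔavg : |scaledAvg g r₂ - scaledAvg g r₁| ≤ b * (r₂ - r₁) + M := by
    refine abs_scaledAvg_sub_le hgc hr1 hr2 fun x hx => ?_
    have hx0 := mul_nonneg h1 hx.1
    have hx12 : r₁ * x ≤ r₂ * x := mul_le_mul_of_nonneg_right h12 hx.1
    have hx2 := (mul_mem_Icc_of_unit hr2 hx).2
    refine (hg _ _ hx0 hx12 hx2).trans ?_
    have e1 := (decayProfile_bounds hH hx0 hx12 hx2).1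
    have e2 : (r₂ - r₁) * x ≤ r₂ - r₁ := mul_le_of_le_one_right hd hx.2
    have : decayProfile H (r₂ * x) - decayProfile H (r₁ * x) ≤ r₂ - r₁ := by linarith
    gcongr
  have hp1 : F r₂ * decayWeight H r₂ - F r₁ * decayWeight H r₁ ≤ δ * (1 + 4 * H) * (r₂ - r₁) := by
    have e : F r₂ * decayWeight H r₂ - F r₁ * decayWeight H r₁
      = (F r₂ - F r₁) * decayWeight H r₂ + F r₁ * (decayWeight H r₂ - decayWeight H r₁) := by ring
    rw [e]
    refine (le_abs_self _).trans ((abs_add_le _ _).trans ?_)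
    rw [abs_mul, abs_mul, abs_of_nonneg hw2.1]
    have hF1 := (hFΓ r₁ hr1).1
    calc _ ≤ δ * (r₂ - r₁) * 1 + δ * (4 * H * (r₂ - r₁)) := by
          have := hw2.1
          have := hw2.2
          gcongr
      _ = _ := by ring
  have hp2 : Γ r₂ * (g r₂ - scaledAvg g r₂) - Γ r₁ * (g r₁ - scaledAvg g r₁)
      ≤ δ * (b * ΔA + M + (b * (r₂ - r₁) + M)) + δ * (r₂ - r₁) * (b * R + M) := by
    have e : Γ r₂ * (g r₂ - scaledAvg g r₂) - Γ r₁ * (g r₁ - scaledAvg g r₁)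
      = Γ r₂ * ((g r₂ - g r₁) - (scaledAvg g r₂ - scaledAvg g r₁))
        + (Γ r₂ - Γ r₁) * (g r₁ - scaledAvg g r₁) := by ring
    rw [e]
    refine (le_abs_self _).trans ((abs_add_le _ _).trans ?_)
    rw [abs_mul, abs_mul]
    have hG2 := (hFΓ r₂ hr2).2
    have hg12 := hg r₁ r₂ h1 h12 h2
    have : |(g r₂ - g r₁) - (scaledAvg g r₂ - scaledAvg g r₁)|
        ≤ b * ΔA + M + (b * (r₂ - r₁) + M) := (abs_sub _ _).trans (add_le_add hg12 hΔavg)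
    gcongr
  have hΔR : r₂ - r₁ ≤ R := by linarith
  set P := (1 + H * R) ^ 4 with hP
  have hP0 : 0 ≤ P := by positivity
  have hbδ : 0 ≤ b * δ := mul_nonneg hb hδ
  have hΔA0 : 0 ≤ ΔA := by
    by_contra hcon
    have hPpos : 0 < P := by positivity
    nlinarith
  have t1 : b * δ * (r₂ - r₁) ≤ b * δ * (P * ΔA) := by gcongr
  have t2 : δ * M * (r₂ - r₁) ≤ δ * M * R := by gcongr
  have t3 : b * (F r₂ * decayWeight H r₂ - F r₁ * decayWeight H r₁)
      ≤ (1 + 4 * H) * (b * δ * (P * ΔA)) := by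
    refine (mul_le_mul_of_nonneg_left hp1 hb).trans ?_
    have : 0 ≤ 1 + 4 * H := by positivity
    linarith [mul_le_mul_of_nonneg_left t1 this]
  have t4 : R * (b * δ * (r₂ - r₁)) ≤ R * (b * δ * (P * ΔA)) := by gcongr
  have t5 : 0 ≤ (b * δ * (P * ΔA)) * H := by positivity
  have t6 : 0 ≤ b * δ * (P * ΔA) := by positivity
  have t7 : 0 ≤ δ * M * P := by positivity
  have t8 : 0 ≤ δ * M * P * H := by positivity
  have t9 : 0 ≤ δ * M * P * R := by positivity
  have t10 : 0 ≤ b * δ * ΔA := by positivity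
  have t11 : 0 ≤ b * δ * ΔA * R := by positivity
  linarith

end Profile

section OneSidedExtrema

variable {f : ℝ → ℝ} {f' a b : ℝ}

lemma nonneg_of_isMaxOn_right_endpoint (hab : a < b) (hf : HasDerivWithinAt f f' (Icc a b) b)
    (hmax : ∀ x ∈ Icc a b, f x ≤ f b) : 0 ≤ f' := by
  have h := IsLocalMaxOn.hasFDerivWithinAt_nonpos
    (IsMaxOn.localize (show IsMaxOn f (Icc a b) b from hmax)) hf.hasFDerivWithinAt
    (sub_mem_posTangentConeAt_of_segment_subset
      ((convex_Icc a b).segment_subset (right_mem_Icc.2 hab.le) (left_mem_Icc.2 hab.le)))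
  simp at h
  nlinarith

lemma nonpos_of_isMaxOn_left_endpoint (hab : a < b) (hf : HasDerivWithinAt f f' (Icc a b) a)
    (hmax : ∀ x ∈ Icc a b, f x ≤ f a) : f' ≤ 0 := by
  have h := IsLocalMaxOn.hasFDerivWithinAt_nonpos
    (IsMaxOn.localize (show IsMaxOn f (Icc a b) a from hmax)) hf.hasFDerivWithinAt
    (sub_mem_posTangentConeAt_of_segment_subset
      ((convex_Icc a b).segment_subset (left_mem_Icc.2 hab.le) (right_mem_Icc.2 hab.le)))
  simp at h
  nlinarith

end OneSidedExtrema

section Comparison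

variable {Λ κ R : ℝ} {h : ℝ → ℝ → ℝ}

lemma IsC1Solution.hasDerivWithinAt_left (hsol : IsC1Solution Λ κ R h) {u r : ℝ} (hu : 0 ≤ u)
    (hr : r ∈ Icc 0 R) : HasDerivWithinAt (fun v => h v r) (pdU h u r) (Ici 0) u :=
  (hsol.2.1 u hu r hr).1.hasDerivWithinAt

lemma IsC1Solution.hasDerivWithinAt_right (hsol : IsC1Solution Λ κ R h) {u r : ℝ} (hu : 0 ≤ u)
    (hr : r ∈ Icc 0 R) : HasDerivWithinAt (h u) (pdR R h u r) (Icc 0 R) r :=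
  (hsol.2.1 u hu r hr).2.hasDerivWithinAt

/-- The equation extends to the axis `r = 0`. -/
lemma IsC1Solution.pdU_eq (hsol : IsC1Solution Λ κ R h) (hΛ : 0 < Λ) (hκ : 0 < κ) (hR : 0 < R)
    {u m : ℝ} (hu : 0 ≤ u) (hm : 0 ≤ m) (hm1 : m ≤ 1)
    (hh : ∀ s ∈ Icc 0 R, ∀ t ∈ Icc 0 R, |h u s - h u t| ≤ m * |s - t|)
    {r : ℝ} (hr : r ∈ Icc 0 R) :
    pdU h u r = metricFt Λ κ h u r / 2 * pdR R h u r
      + coefG Λ κ h u r * (h u r - radAvg h u r) := by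
  obtain ⟨c, -, hc⟩ := exists_coef_bounds hΛ hκ hR
  obtain ⟨F, Γ, h1, h2⟩ := hc h u m hm hm1 hh
  have hF : ContinuousOn (metricFt Λ κ h u) (Icc 0 R) := by
    have : ContinuousOn F (Icc 0 R) :=
      continuousOn_of_abs_sub_le_of_le fun s t hs hst ht => (h2 s t hs hst ht).1
    refine ContinuousOn.congr (f := fun r => 1 - Λ / 3 * r ^ 2 + F r) ?_ fun r hr => (h1 r hr).1
    fun_prop
  have hG : ContinuousOn (coefG Λ κ h u) (Icc 0 R) := by
    have : ContinuousOn Γ (Icc 0 R) :=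
      continuousOn_of_abs_sub_le_of_le fun s t hs hst ht => (h2 s t hs hst ht).2
    refine ContinuousOn.congr (f := fun r => -(Λ / 3) * r + Γ r) ?_ fun r hr => (h1 r hr).2.1
    fun_prop
  have hpair : ContinuousOn (fun r : ℝ => (u, r)) (Icc 0 R) := by fun_prop
  have hmaps : MapsTo (fun r : ℝ => (u, r)) (Icc 0 R) (Ici 0 ×ˢ Icc 0 R) :=
    fun r hr => ⟨hu, hr⟩
  have hpU : ContinuousOn (pdU h u) (Icc 0 R) := hsol.2.2.1.comp hpair hmaps
  have hpR : ContinuousOn (pdR R h u) (Icc 0 R) := hsol.2.2.2.1.comp hpair hmaps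
  refine Set.EqOn.of_subset_closure (s := Ioc 0 R) (t := Icc 0 R) (f := pdU h u)
    (g := fun r => metricFt Λ κ h u r / 2 * pdR R h u r
      + coefG Λ κ h u r * (h u r - radAvg h u r)) (fun r hr => ?_) hpU ?_
    Ioc_subset_Icc_self (closure_Ioc hR.ne).ge hr
  · have := hsol.2.2.2.2 u hu r hr
    simp only
    linarith
  · exact ((hF.div_const 2).mul hpR).add
      (hG.mul ((continuousOn_of_abs_sub_le hh).sub (continuousOn_radAvg hh hm)))

lemma scaledAvg_const_mul (σ : ℝ) (k : ℝ → ℝ) (r : ℝ) :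
    scaledAvg (fun s => σ * k s) r = σ * scaledAvg k r := by
  simp [scaledAvg]

lemma IsC1Solution.exists_isMaxOn_difference (hsol : IsC1Solution Λ κ R h) {H : ℝ} (hH : 0 < H)
    {b : ℝ → ℝ} (hb : ContinuousOn b (Ici 0)) (K : ℝ) {T r₁ r₂ : ℝ} (hT : 0 ≤ T) (h1 : 0 ≤ r₁)
    (h12 : r₁ ≤ r₂) (h2 : r₂ ≤ R)
    (hpos : b T * (decayProfile H r₂ - decayProfile H r₁) < |h T r₂ - h T r₁|) :
    ∃ u s t M, 0 ≤ u ∧ 0 ≤ s ∧ s ≤ t ∧ t ≤ R ∧ 0 < M ∧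
      |h u t - h u s| - b u * (decayProfile H t - decayProfile H s) = M ∧
      ∀ u' s' t', 0 ≤ u' → u' ≤ u → 0 ≤ s' → s' ≤ t' → t' ≤ R →
        exp (-K * u') * (|h u' t' - h u' s'| - b u' * (decayProfile H t' - decayProfile H s'))
          ≤ exp (-K * u) * M := by
  set S : Set (ℝ × ℝ × ℝ) := (Icc 0 T ×ˢ Icc 0 R ×ˢ Icc 0 R) ∩ {p | p.2.1 ≤ p.2.2} with hS
  have hScomp : IsCompact S :=
    (isCompact_Icc.prod (isCompact_Icc.prod isCompact_Icc)).inter_right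
      (isClosed_le (by fun_prop) (by fun_prop))
  set Y : ℝ × ℝ × ℝ → ℝ := fun p => exp (-K * p.1) *
    (|h p.1 p.2.2 - h p.1 p.2.1| - b p.1 * (decayProfile H p.2.2 - decayProfile H p.2.1)) with hY
  have hYc : ContinuousOn Y S := by
    have c1 : ContinuousOn (fun p : ℝ × ℝ × ℝ => h p.1 p.2.1) S :=
      hsol.1.comp (f := fun p : ℝ × ℝ × ℝ => (p.1, p.2.1)) (by fun_prop)
        fun p hp => ⟨hp.1.1.1, hp.1.2.1⟩
    have c2 : ContinuousOn (fun p : ℝ × ℝ × ℝ => h p.1 p.2.2) S :=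
      hsol.1.comp (f := fun p : ℝ × ℝ × ℝ => (p.1, p.2.2)) (by fun_prop)
        fun p hp => ⟨hp.1.1.1, hp.1.2.2⟩
    have c3 : ContinuousOn (fun p : ℝ × ℝ × ℝ => b p.1) S :=
      hb.comp (by fun_prop) fun p hp => hp.1.1.1
    have hA : ContinuousOn (decayProfile H) (Icc 0 R) := fun x hx =>
      (hasDerivAt_decayProfile hH hx.1).continuousAt.continuousWithinAt
    have c4 : ContinuousOn (fun p : ℝ × ℝ × ℝ => decayProfile H p.2.1) S :=
      hA.comp (by fun_prop) fun p hp => hp.1.2.1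
    have c5 : ContinuousOn (fun p : ℝ × ℝ × ℝ => decayProfile H p.2.2) S :=
      hA.comp (by fun_prop) fun p hp => hp.1.2.2
    have c6 : Continuous fun p : ℝ × ℝ × ℝ => exp (-K * p.1) := by fun_prop
    exact c6.continuousOn.mul ((c2.sub c1).abs.sub (c3.mul (c5.sub c4)))
  have hmem : ((T, r₁, r₂) : ℝ × ℝ × ℝ) ∈ S :=
    ⟨⟨⟨hT, le_rfl⟩, ⟨h1, h12.trans h2⟩, ⟨h1.trans h12, h2⟩⟩, h12⟩
  obtain ⟨⟨u, s, t⟩, ⟨⟨hu, hs, ht⟩, hst⟩, hmax⟩ := hScomp.exists_isMaxOn ⟨_, hmem⟩ hYc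
  refine ⟨u, s, t, _, hu.1, hs.1, hst, ht.2, ?_, rfl, fun u' s' t' hu' huu hs' hst' ht' => ?_⟩
  · have : 0 < Y (u, s, t) :=
      lt_of_lt_of_le (mul_pos (exp_pos _) (sub_pos.2 hpos)) (hmax hmem)
    exact pos_of_mul_pos_right this (exp_pos _).le
  · exact hmax (show ((u', s', t') : ℝ × ℝ × ℝ) ∈ S from
      ⟨⟨⟨hu', huu.trans hu.2⟩, ⟨hs', hst'.trans ht'⟩, ⟨hs'.trans hst', ht'⟩⟩, hst'⟩)

/-- Two-point maximum principle: given an a priori Lipschitz bound `m` on `h(u,·)`, differences of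
`h(u,·)` are dominated by `b` times those of the decay profile, for every supersolution `b` of
`b' = (-2H + C m²) b`. -/
lemma exists_comparison {H : ℝ} (hH : 0 < H) (hΛH : Λ / 3 = H ^ 2) (hκ : 0 < κ) (hR : 0 < R)
    (hHR : 1 < H ^ 2 * R ^ 2) :
    ∃ C > 0, ∃ m₀ > 0, m₀ ≤ 1 ∧ ∀ h : ℝ → ℝ → ℝ, IsC1Solution Λ κ R h → ∀ m b b' : ℝ → ℝ,
      (∀ u, 0 ≤ u → 0 ≤ m u ∧ m u ≤ m₀) →
      (∀ u, 0 ≤ u → ∀ s ∈ Icc 0 R, ∀ t ∈ Icc 0 R, |h u s - h u t| ≤ m u * |s - t|) →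
      (∀ u, HasDerivAt b (b' u) u) → (∀ u, 0 ≤ u → 0 ≤ b u) →
      (∀ u, 0 ≤ u → (-2 * H + C * m u ^ 2) * b u ≤ b' u) →
      (∀ s t, 0 ≤ s → s ≤ t → t ≤ R →
        |h 0 t - h 0 s| ≤ b 0 * (decayProfile H t - decayProfile H s)) →
      ∀ u, 0 ≤ u → ∀ s t, 0 ≤ s → s ≤ t → t ≤ R →
        |h u t - h u s| ≤ b u * (decayProfile H t - decayProfile H s) := by
  have hΛ : 0 < Λ := by nlinarith [pow_pos hH 2]
  obtain ⟨c, hc0, hc⟩ := exists_coef_bounds hΛ hκ hR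
  obtain ⟨C, hC0, hC⟩ := exists_extremal_difference_bound (R := R) hH hR.le
  refine ⟨C * c, by positivity, min 1 ((H ^ 2 * R ^ 2 - 1) / c),
    lt_min one_pos (div_pos (by linarith) hc0), min_le_left _ _, ?_⟩
  intro h hsol m b b' hm hlip hb hb0 hbm hinit T hT q₁ q₂ hq1 hq12 hq2
  by_contra! hcon
  obtain ⟨u, r₁, r₂, M, hu, h1, h12, h2, hM, hMeq, hmax⟩ :=
    hsol.exists_isMaxOn_difference hH (fun x _ => (hb x).continuousAt.continuousWithinAt)
      (C * c + 1) hT hq1 hq12 hq2 hcon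
  set K := C * c + 1 with hK
  have hu0 : 0 < u := by
    refine hu.lt_of_ne fun h0 => ?_
    have := hinit r₁ r₂ h1 h12 h2
    rw [← h0] at hMeq
    linarith
  have hlt : r₁ < r₂ := by
    refine h12.lt_of_ne fun h0 => ?_
    rw [h0] at hMeq
    simp at hMeq
    exact hM.ne hMeq
  have hr1 : r₁ ∈ Icc 0 R := ⟨h1, h12.trans h2⟩
  have hr2 : r₂ ∈ Icc 0 R := ⟨h1.trans h12, h2⟩
  obtain ⟨σ, hσ, hσM⟩ : ∃ σ : ℝ, |σ| = 1 ∧ σ * (h u r₂ - h u r₁) = |h u r₂ - h u r₁| := by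
    rcases abs_choice (h u r₂ - h u r₁) with h' | h'
    · exact ⟨1, by simp, by rw [h', one_mul]⟩
    · exact ⟨-1, by simp, by rw [h']; ring⟩
  have hσle : ∀ x, σ * x ≤ |x| := fun x => by
    simpa [abs_mul, hσ] using le_abs_self (σ * x)
  have hspace : ∀ s t, 0 ≤ s → s ≤ t → t ≤ R →
      |h u t - h u s| ≤ b u * (decayProfile H t - decayProfile H s) + M := by
    intro s t hs hst ht
    have := le_of_mul_le_mul_left (hmax u s t hu le_rfl hs hst ht) (exp_pos _)
    linarith
  obtain ⟨hm0, hmm⟩ := hm u hu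
  have hm1 : m u ≤ 1 := hmm.trans (min_le_left _ _)
  obtain ⟨F, Γ, hFΓ, hFΓ'⟩ := hc h u (m u) hm0 hm1 (hlip u hu)
  have hmc : m u ^ 2 ≤ m u := by rw [sq]; exact mul_le_of_le_one_left hm0 hm1
  -- sign of the radial boundary terms
  have hd2 : metricFt Λ κ h u r₂ * (σ * pdR R h u r₂ - b u * decayWeight H r₂) ≤ 0 := by
    have hder : HasDerivWithinAt (fun r => σ * h u r - b u * decayProfile H r)
        (σ * pdR R h u r₂ - b u * decayWeight H r₂) (Icc r₁ R) r₂ :=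
      (((hsol.hasDerivWithinAt_right hu hr2).mono (Icc_subset_Icc_left h1)).const_mul σ).sub
        ((hasDerivAt_decayProfile hH hr2.1).hasDerivWithinAt.const_mul (b u))
    have hle : ∀ r ∈ Icc r₁ R,
        σ * h u r - b u * decayProfile H r ≤ σ * h u r₂ - b u * decayProfile H r₂ := by
      intro r hr
      have e1 := hspace r₁ r h1 hr.1 hr.2
      have e2 := hσle (h u r - h u r₁)
      linarith
    rcases h2.eq_or_lt with hEq | hLt
    · subst hEq
      have hft : metricFt Λ κ h u r₂ ≤ 0 := by
        rw [(hFΓ r₂ hr2).1, hΛH]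
        have e1 := (abs_le.1 (hFΓ r₂ hr2).2.2.1).2
        have e2 : m u * c ≤ H ^ 2 * r₂ ^ 2 - 1 :=
          (le_div_iff₀ hc0).1 (hmm.trans (min_le_right _ _))
        nlinarith
      exact mul_nonpos_of_nonpos_of_nonneg hft
        (nonneg_of_isMaxOn_right_endpoint hlt hder hle)
    · have hnhds : Icc r₁ R ∈ nhds r₂ := Icc_mem_nhds hlt hLt
      have := IsLocalMax.hasDerivAt_eq_zero (Filter.mem_of_superset hnhds hle)
        (hder.hasDerivAt hnhds)
      rw [this, mul_zero]
  have hd1 : 0 ≤ metricFt Λ κ h u r₁ * (σ * pdR R h u r₁ - b u * decayWeight H r₁) := by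
    have hder : HasDerivWithinAt (fun r => b u * decayProfile H r - σ * h u r)
        (b u * decayWeight H r₁ - σ * pdR R h u r₁) (Icc 0 r₂) r₁ :=
      ((hasDerivAt_decayProfile hH h1).hasDerivWithinAt.const_mul (b u)).sub
        (((hsol.hasDerivWithinAt_right hu hr1).mono (Icc_subset_Icc_right h2)).const_mul σ)
    have hle : ∀ r ∈ Icc 0 r₂,
        b u * decayProfile H r - σ * h u r ≤ b u * decayProfile H r₁ - σ * h u r₁ := by
      intro r hr
      have e1 := hspace r r₂ hr.1 hr.2 h2
      have e2 := hσle (h u r₂ - h u r)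
      linarith
    rcases h1.eq_or_lt with hEq | hLt
    · subst hEq
      have hft : metricFt Λ κ h u 0 = 1 := by simp [metricFt]
      rw [hft]
      linarith [nonpos_of_isMaxOn_left_endpoint hlt hder hle]
    · have hnhds : Icc 0 r₂ ∈ nhds r₁ := Icc_mem_nhds hLt hlt
      have := IsLocalMax.hasDerivAt_eq_zero (Filter.mem_of_superset hnhds hle)
        (hder.hasDerivAt hnhds)
      rw [show σ * pdR R h u r₁ - b u * decayWeight H r₁ = 0 by linarith, mul_zero]
  -- the time derivative
  set ΔA := decayProfile H r₂ - decayProfile H r₁ with hΔA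
  have htime : K * M ≤ σ * (pdU h u r₂ - pdU h u r₁) - b' u * ΔA := by
    have hsub : Icc 0 u ⊆ Ici 0 := Icc_subset_Ici_self
    have hexp : HasDerivAt (fun v => exp (-K * v)) (exp (-K * u) * -K) u := by
      simpa using ((hasDerivAt_id u).const_mul (-K)).exp
    have hder := hexp.hasDerivWithinAt.mul
      (((((hsol.hasDerivWithinAt_left hu hr2).mono hsub).sub
        ((hsol.hasDerivWithinAt_left hu hr1).mono hsub)).const_mul σ).sub
          (((hb u).hasDerivWithinAt (s := Icc 0 u)).mul_const ΔA))
    have h0 := nonneg_of_isMaxOn_right_endpoint hu0 hder fun v hv => by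
      have e1 := hmax v r₁ r₂ hv.1 hv.2 h1 h12 h2
      have e2 := hσle (h v r₂ - h v r₁)
      simp only [Pi.mul_apply, Pi.sub_apply]
      rw [hσM, hMeq]
      refine le_trans ?_ e1
      gcongr
    simp only [Pi.sub_apply] at h0
    rw [hσM, hMeq] at h0
    have := nonneg_of_mul_nonneg_right (b := -K * M +
      (σ * (pdU h u r₂ - pdU h u r₁) - b' u * ΔA)) (by linarith) (exp_pos (-K * u))
    linarith
  have hext := hC (fun r => σ * h u r) F Γ (c * m u ^ 2) (b u) M r₁ r₂
    (((continuousOn_of_abs_sub_le (hlip u hu))).const_smul σ) (by positivity) (hb0 u hu) hM.le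
    h1 h12 h2 (fun r hr => (hFΓ r hr).2.2) (hFΓ' r₁ r₂ h1 h12 h2).1 (hFΓ' r₁ r₂ h1 h12 h2).2
    (fun s t hs hst ht => by
      rw [← mul_sub, abs_mul, hσ, one_mul]; exact hspace s t hs hst ht)
    (by rw [← mul_sub, hσM, ← hMeq]; ring)
  rw [scaledAvg_const_mul, scaledAvg_const_mul, ← hΔA] at hext
  have p1 := hsol.pdU_eq hΛ hκ hR hu hm0 hm1 (hlip u hu) hr1
  have p2 := hsol.pdU_eq hΛ hκ hR hu hm0 hm1 (hlip u hu) hr2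
  rw [(hFΓ r₁ hr1).2.1, radAvg_eq_scaledAvg] at p1
  rw [(hFΓ r₂ hr2).2.1, radAvg_eq_scaledAvg] at p2
  have f1 : 1 - H ^ 2 * r₁ ^ 2 + F r₁ = metricFt Λ κ h u r₁ := by rw [(hFΓ r₁ hr1).1, hΛH]
  have f2 : 1 - H ^ 2 * r₂ ^ 2 + F r₂ = metricFt Λ κ h u r₂ := by rw [(hFΓ r₂ hr2).1, hΛH]
  rw [f1, f2, ← hΛH] at hext
  rw [p1, p2] at htime
  have hΔA0 : 0 ≤ ΔA := by
    have hP : 0 < (1 + H * R) ^ 4 := by positivity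
    exact nonneg_of_mul_nonneg_right
      ((sub_nonneg.2 h12).trans (decayProfile_bounds hH h1 h12 h2).2.1) hP
  have hsup := mul_le_mul_of_nonneg_right (hbm u hu) hΔA0
  have hfin : C * (c * m u ^ 2) * M ≤ C * c * M := by
    have : C * (c * m u ^ 2) ≤ C * c := by
      calc C * (c * m u ^ 2) ≤ C * (c * 1) := by gcongr; exact pow_le_one₀ hm0 hm1
        _ = _ := by ring
    gcongr
  have : K * M ≤ C * (c * m u ^ 2) * M := by linarith
  rw [hK] at this
  linarith

end Comparison

section Decay

variable {Λ κ R : ℝ} {h : ℝ → ℝ → ℝ}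

lemma hasDerivAt_const_mul_exp (a c u : ℝ) :
    HasDerivAt (fun v => a * exp (c * v)) (c * (a * exp (c * u))) u :=
  ((((hasDerivAt_id u).const_mul c).exp).const_mul a).congr_deriv (by simp only [id]; ring)

lemma exists_limit_of_abs_deriv_le_exp {y y' : ℝ → ℝ} {D c : ℝ} (hc : 0 < c)
    (hy : ∀ u, 0 ≤ u → HasDerivWithinAt y (y' u) (Ici 0) u)
    (hy' : ∀ u, 0 ≤ u → |y' u| ≤ D * exp (-c * u)) :
    ∃ l, ∀ u, 0 ≤ u → |y u - l| ≤ D / c * exp (-c * u) := by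
  have hE : ∀ u, HasDerivAt (fun v => D / c * exp (-c * v)) (-(D * exp (-c * u))) u :=
    fun u => (hasDerivAt_const_mul_exp _ _ _).congr_deriv (by field_simp)
  have hp : ∀ u, 0 ≤ u → HasDerivWithinAt (fun v => y v - D / c * exp (-c * v))
      (y' u - -(D * exp (-c * u))) (Ici 0) u :=
    fun u hu => (hy u hu).sub (hE u).hasDerivWithinAt
  have hq : ∀ u, 0 ≤ u → HasDerivWithinAt (fun v => y v + D / c * exp (-c * v))
      (y' u + -(D * exp (-c * u))) (Ici 0) u :=
    fun u hu => (hy u hu).add (hE u).hasDerivWithinAt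
  have hint : ∀ {u : ℝ}, u ∈ interior (Ici (0 : ℝ)) → 0 ≤ u := fun hu => interior_subset hu
  have hmono : MonotoneOn (fun v => y v - D / c * exp (-c * v)) (Ici 0) :=
    monotoneOn_of_hasDerivWithinAt_nonneg (convex_Ici 0)
      (fun u hu => (hp u hu).continuousWithinAt)
      (fun u hu => (hp u (hint hu)).mono interior_subset)
      (fun u hu => by linarith [(abs_le.1 (hy' u (hint hu))).1])
  have hanti : AntitoneOn (fun v => y v + D / c * exp (-c * v)) (Ici 0) :=
    antitoneOn_of_hasDerivWithinAt_nonpos (convex_Ici 0)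
      (fun u hu => (hq u hu).continuousWithinAt)
      (fun u hu => (hq u (hint hu)).mono interior_subset)
      (fun u hu => by linarith [(abs_le.1 (hy' u (hint hu))).2])
  have hD : 0 ≤ D := by simpa using (abs_nonneg _).trans (hy' 0 le_rfl)
  have hpq : ∀ u v, 0 ≤ u → 0 ≤ v →
      y u - D / c * exp (-c * u) ≤ y v + D / c * exp (-c * v) := by
    intro u v hu hv
    have hw : (0 : ℝ) ≤ max u v := hu.trans (le_max_left _ _)
    have h1 := hmono (mem_Ici.2 hu) (mem_Ici.2 hw) (le_max_left u v)
    have h2 := hanti (mem_Ici.2 hv) (mem_Ici.2 hw) (le_max_right u v)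
    have h3 : 0 ≤ D / c * exp (-c * max u v) := by positivity
    simp only at h1 h2
    linarith
  refine ⟨sSup ((fun v => y v - D / c * exp (-c * v)) '' Ici 0), fun u hu => ?_⟩
  have hne : ((fun v => y v - D / c * exp (-c * v)) '' Ici 0).Nonempty := 
    ⟨_, 0, mem_Ici.2 le_rfl, rfl⟩
  have hub : ∀ v, 0 ≤ v → y v + D / c * exp (-c * v) ∈
      upperBounds ((fun v => y v - D / c * exp (-c * v)) '' Ici 0) := by
    rintro v hv _ ⟨w, hw, rfl⟩
    exact hpq w v hw hv
  have h1 := le_csSup ⟨_, hub u hu⟩ (mem_image_of_mem _ (mem_Ici.2 hu))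
  have h2 := csSup_le hne (hub u hu)
  rw [abs_le]
  constructor <;> linarith

lemma abs_sub_le_mul_abs_of_ordered {k : ℝ → ℝ} {B : ℝ}
    (hk : ∀ s t, 0 ≤ s → s ≤ t → t ≤ R → |k t - k s| ≤ B * (t - s)) :
    ∀ s ∈ Icc 0 R, ∀ t ∈ Icc 0 R, |k s - k t| ≤ B * |s - t| := by
  intro s hs t ht
  rcases le_total s t with hst | hst
  · rw [abs_sub_comm, abs_sub_comm s, abs_of_nonneg (sub_nonneg.2 hst)]
    exact hk s t hs.1 hst ht.2
  · rw [abs_of_nonneg (sub_nonneg.2 hst)]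
    exact hk t s ht.1 hst hs.2

lemma IsC1Solution.abs_sub_le_of_abs_pdR_le (hsol : IsC1Solution Λ κ R h) {u ε : ℝ} (hu : 0 ≤ u)
    (hε : ∀ r ∈ Icc 0 R, |pdR R h u r| ≤ ε) :
    ∀ s ∈ Icc 0 R, ∀ t ∈ Icc 0 R, |h u s - h u t| ≤ ε * |s - t| := fun _ hs _ ht =>
  (convex_Icc 0 R).norm_image_sub_le_of_norm_hasDerivWithin_le
    (fun _ hr => hsol.hasDerivWithinAt_right hu hr) hε ht hs

lemma IsC1Solution.abs_pdR_right_le (hsol : IsC1Solution Λ κ R h) (hR : 0 < R) {u B : ℝ}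
    (hu : 0 ≤ u) (hB : ∀ s ∈ Icc 0 R, ∀ t ∈ Icc 0 R, |h u s - h u t| ≤ B * |s - t|) :
    |pdR R h u R| ≤ B := by
  have hRm : R ∈ Icc 0 R := right_mem_Icc.2 hR.le
  have hd := hsol.hasDerivWithinAt_right hu hRm
  have hlin : HasDerivWithinAt (fun x : ℝ => B * x) (B * 1) (Icc 0 R) R :=
    (hasDerivWithinAt_id R _).const_mul B
  have key : ∀ x ∈ Icc 0 R, |h u R - h u x| ≤ B * (R - x) := fun x hx => by
    simpa [abs_of_nonneg (sub_nonneg.2 hx.2)] using hB R hRm x hx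
  have h1 := nonneg_of_isMaxOn_right_endpoint hR (hlin.sub hd)
    (fun x hx => by simp only [Pi.sub_apply]; linarith [(abs_le.1 (key x hx)).2])
  have h2 := nonneg_of_isMaxOn_right_endpoint hR (hlin.add hd)
    (fun x hx => by simp only [Pi.add_apply]; linarith [(abs_le.1 (key x hx)).1])
  exact abs_le.2 ⟨by linarith, by linarith⟩

/-- A first application of the comparison principle, with a constant Lipschitz bound, gives decay
at rate `H`; feeding this back yields the sharp rate `2 * H`. -/
lemma exists_exponential_lipschitz {H : ℝ} (hH : 0 < H) (hΛH : Λ / 3 = H ^ 2) (hκ : 0 < κ)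
    (hR : 0 < R) (hHR : 1 < H ^ 2 * R ^ 2) :
    ∃ ε > 0, ε ≤ 1 ∧ ∃ B > 0, ∀ h : ℝ → ℝ → ℝ, IsC1Solution Λ κ R h →
      (∀ u, 0 ≤ u → ∀ s ∈ Icc 0 R, ∀ t ∈ Icc 0 R, |h u s - h u t| ≤ ε * |s - t|) →
      ∀ u, 0 ≤ u → ∀ s ∈ Icc 0 R, ∀ t ∈ Icc 0 R,
        |h u s - h u t| ≤ B * exp (-(2 * H) * u) * |s - t| := by
  obtain ⟨C, hC, m₀, hm₀, hm₀1, hcomp⟩ := exists_comparison hH hΛH hκ hR hHR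
  set P := (1 + H * R) ^ 4 with hP
  have hP1 : 1 ≤ P := one_le_pow₀ (by linarith [mul_pos hH hR])
  have hP0 : 0 < P := by linarith
  set ε := min (m₀ / P) (H / C) with hεdef
  have hε : 0 < ε := lt_min (by positivity) (by positivity)
  have hPε : P * ε ≤ m₀ := by
    have : ε ≤ m₀ / P := min_le_left _ _
    rwa [le_div_iff₀ hP0, mul_comm] at this
  have hεm : ε ≤ m₀ := by nlinarith
  have hε1 : ε ≤ 1 := hεm.trans hm₀1
  have hCε : C * ε ^ 2 ≤ H := by
    have h1 : ε ≤ H / C := min_le_right _ _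
    rw [le_div_iff₀ hC] at h1
    nlinarith [mul_pos hC hε]
  set q := C * (P * ε) ^ 2 with hq
  set w := q / (2 * H) with hw
  have hq0 : 0 ≤ q := by positivity
  have hw0 : 0 ≤ w := by positivity
  refine ⟨ε, hε, hε1, P * ε * exp w, by positivity, fun h hsol hlip => ?_⟩
  have hinit : ∀ s t, 0 ≤ s → s ≤ t → t ≤ R →
      |h 0 t - h 0 s| ≤ P * ε * (decayProfile H t - decayProfile H s) := by
    intro s t hs hst ht
    have h1 := hlip 0 le_rfl t ⟨hs.trans hst, ht⟩ s ⟨hs, hst.trans ht⟩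
    rw [abs_of_nonneg (sub_nonneg.2 hst)] at h1
    have h2 := (decayProfile_bounds hH hs hst ht).2.1
    calc _ ≤ ε * (t - s) := h1
      _ ≤ ε * (P * (decayProfile H t - decayProfile H s)) := by gcongr
      _ = _ := by ring
  have hlip₁ : ∀ u, 0 ≤ u → ∀ s ∈ Icc 0 R, ∀ t ∈ Icc 0 R,
      |h u s - h u t| ≤ P * ε * exp (-H * u) * |s - t| := by
    intro u hu
    refine abs_sub_le_mul_abs_of_ordered fun s t hs hst ht => ?_
    refine (hcomp h hsol (fun _ => ε) (fun u => P * ε * exp (-H * u))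
      (fun u => -H * (P * ε * exp (-H * u))) (fun _ _ => ⟨hε.le, hεm⟩) hlip (fun u => ?_)
      (fun u _ => by positivity) (fun u _ => ?_) (by simpa using hinit) u hu s t hs hst ht).trans ?_
    · exact hasDerivAt_const_mul_exp _ _ _
    · gcongr
      linarith
    · exact mul_le_mul_of_nonneg_left (decayProfile_bounds hH hs hst ht).1 (by positivity)
  intro u hu
  refine abs_sub_le_mul_abs_of_ordered fun s t hs hst ht => ?_
  refine (hcomp h hsol (fun u => P * ε * exp (-H * u))
    (fun u => P * ε * exp (w - 2 * H * u - w * exp (-(2 * H) * u)))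
    (fun u => (-2 * H + q * exp (-(2 * H) * u))
      * (P * ε * exp (w - 2 * H * u - w * exp (-(2 * H) * u))))
    (fun u hu => ⟨by positivity, ?_⟩) hlip₁ (fun u => ?_)
    (fun u _ => by positivity) (fun u _ => ?_) (by simpa using hinit) u hu s t hs hst ht).trans ?_
  · refine le_trans (mul_le_of_le_one_right (by positivity) ?_) hPε
    exact exp_le_one_iff.2 (by nlinarith)
  · have h1 := hasDerivAt_const_mul_exp w (-(2 * H)) u
    have h2 := ((((hasDerivAt_id u).const_mul (2 * H)).const_sub w).sub h1).exp.const_mul (P * ε)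
    refine h2.congr_deriv ?_
    simp only [Pi.sub_apply, id]
    rw [hw]
    field_simp
    ring
  · have : C * (P * ε * exp (-H * u)) ^ 2 = q * exp (-(2 * H) * u) := by
      rw [mul_pow, ← exp_nat_mul, hq]
      push_cast
      ring_nf
    rw [this]
  · rw [mul_assoc (P * ε) (exp w), ← exp_add]
    refine (mul_le_mul_of_nonneg_left (decayProfile_bounds hH hs hst ht).1 (by positivity)).trans ?_
    have := sub_nonneg.2 hst
    gcongr
    linarith [mul_nonneg hw0 (exp_pos (-(2 * H) * u)).le]

end Decay

/-- Exponential convergence of the scalar field `φ = h̄` to a constant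
at rate `2H`, `H = √(Λ/3)`, for C¹ solutions with small `sup(|h|+|∂_r h|)`. -/
theorem scalar_field_exponential_decay
    (Λ κ R : ℝ) (hΛ : 0 < Λ) (hκ : 0 < κ) (hR : Real.sqrt (3 / Λ) < R) :
    ∃ ε > (0:ℝ), ∀ h : ℝ → ℝ → ℝ, IsC1Solution Λ κ R h →
      (∀ u ∈ Ici (0:ℝ), ∀ r ∈ Icc (0:ℝ) R, |h u r| + |pdR R h u r| < ε) →
      ∃ φbar : ℝ, ∃ C > (0:ℝ), ∀ u ∈ Ici (0:ℝ), ∀ r ∈ Icc (0:ℝ) R,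
        |radAvg h u r - φbar| ≤ C * Real.exp (-2 * Real.sqrt (Λ / 3) * u) := by
  set H := Real.sqrt (Λ / 3) with hHdef
  have hH : 0 < H := Real.sqrt_pos.2 (by positivity)
  have hH2 : Λ / 3 = H ^ 2 := (Real.sq_sqrt (by positivity)).symm
  have hR0 : 0 < R := (Real.sqrt_nonneg _).trans_lt hR
  have hHR : 1 < H ^ 2 * R ^ 2 := by
    have h1 : 3 / Λ < R ^ 2 := (Real.sqrt_lt' hR0).1 hR
    rw [div_lt_iff₀ hΛ] at h1
    rw [← hH2]
    linarith
  obtain ⟨ε, hε, hε1, B, hB, hmain⟩ := exists_exponential_lipschitz hH hH2 hκ hR0 hHR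
  obtain ⟨c, hc, hcoef⟩ := exists_coef_bounds hΛ hκ hR0
  refine ⟨ε, hε, fun h hsol hsmall => ?_⟩
  have hlip : ∀ u, 0 ≤ u → ∀ s ∈ Icc 0 R, ∀ t ∈ Icc 0 R, |h u s - h u t| ≤ ε * |s - t| :=
    fun u hu => hsol.abs_sub_le_of_abs_pdR_le hu fun r hr => by
      linarith [hsmall u hu r hr, abs_nonneg (h u r)]
  have hdecay := hmain h hsol hlip
  have hRm : R ∈ Icc 0 R := right_mem_Icc.2 hR0.le
  set D := (1 + Λ / 3 * R ^ 2 + c) / 2 * B + (Λ / 3 * R + c) * (B * R) with hD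
  have hpdU : ∀ u, 0 ≤ u → |pdU h u R| ≤ D * exp (-(2 * H) * u) := by
    intro u hu
    obtain ⟨F, Γ, hFΓ, -⟩ := hcoef h u ε hε.le hε1 (hlip u hu)
    obtain ⟨hF, hΓ, hFb, hΓb⟩ := hFΓ R hRm
    have hcε : c * ε ^ 2 ≤ c := mul_le_of_le_one_right hc.le (pow_le_one₀ hε.le hε1)
    have hft : |metricFt Λ κ h u R / 2| ≤ (1 + Λ / 3 * R ^ 2 + c) / 2 := by
      have h1 : 0 ≤ Λ / 3 * R ^ 2 := by positivity
      have h2 := abs_le.1 (hFb.trans hcε)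
      rw [hF, abs_le]
      constructor <;> linarith
    have hG : |coefG Λ κ h u R| ≤ Λ / 3 * R + c := by
      have h1 : 0 ≤ Λ / 3 * R := by positivity
      have h2 := abs_le.1 (hΓb.trans hcε)
      rw [hΓ, abs_le]
      constructor <;> linarith
    have h1 := hsol.abs_pdR_right_le hR0 hu (hdecay u hu)
    have h2 := abs_sub_radAvg_le (hdecay u hu) (by positivity) hRm
    rw [hsol.pdU_eq hΛ hκ hR0 hu hε.le hε1 (hlip u hu) hRm]
    calc _ ≤ |metricFt Λ κ h u R / 2| * |pdR R h u R|
          + |coefG Λ κ h u R| * |h u R - radAvg h u R| := by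
          rw [← abs_mul, ← abs_mul]; exact abs_add_le _ _
      _ ≤ (1 + Λ / 3 * R ^ 2 + c) / 2 * (B * exp (-(2 * H) * u))
          + (Λ / 3 * R + c) * (B * exp (-(2 * H) * u) * R) := by gcongr
      _ = _ := by rw [hD]; ring
  obtain ⟨l, hl⟩ := exists_limit_of_abs_deriv_le_exp (by positivity : 0 < 2 * H)
    (fun u hu => hsol.hasDerivWithinAt_left hu hRm) hpdU
  refine ⟨l, B * R + B * R + D / (2 * H), by positivity, fun u hu r hr => ?_⟩
  set E := exp (-(2 * H) * u) with hE
  have h1 : |radAvg h u r - h u r| ≤ B * E * R := by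
    rw [abs_sub_comm]
    refine (abs_sub_radAvg_le (hdecay u hu) (by positivity) hr).trans ?_
    gcongr
    exact hr.2
  have h2 : |h u r - h u R| ≤ B * E * R := by
    refine (hdecay u hu r hr R hRm).trans ?_
    rw [abs_sub_comm, abs_of_nonneg (sub_nonneg.2 hr.2)]
    gcongr
    linarith [hr.1]
  have h3 := hl u hu
  have hEeq : exp (-2 * H * u) = E := by rw [hE]; ring_nf
  rw [hEeq]
  calc _ = |(radAvg h u r - h u r) + (h u r - h u R) + (h u R - l)| := by ring_nf
    _ ≤ |radAvg h u r - h u r| + |h u r - h u R| + |h u R - l| := abs_add_three _ _ _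
    _ ≤ B * E * R + B * E * R + D / (2 * H) * E := by gcongr
    _ = _ := by ring
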